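/- |w_1(0) − h_1 − Σ_{i=1}^N J_{1i} m_i(1,h)| ≤ (‖J_1‖_∞/ĥ) · (‖J_1‖_1 + log(1 + ‖J_1‖_1/ĥ)). -/

import Mathlib

/-!
Write `F(t) = ∑ J₁ᵢ mᵢ(t, w(t))`, so that `w₁' = -F`. The function `w₁(t) + t F(t)` has derivative
`t F'(t)`, and its increment over `[0,1]` is `h₁ + F(1) - w₁(0)`; hence the claim follows from
`|F'| ≤ ‖J₁‖_∞ ‖J₁‖₁ / ĥ` on `[0,1]`, which is even stronger than required since the
logarithm is nonnegative.

With `L = ∑ J₁ᵢ σᵢ` and `⟨·⟩` the Gibbs mean, differentiating the Gibbs weights gives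
`F' = Cov(L, σ₁ L - F σ₁) = Cov(σ₁ L, L) - F Cov(σ₁, L) = u₃(σ₁, L, L) + ⟨σ₁⟩ Var(L)`,
where `u₃` is the third cumulant. The second expression and `Cov(σ₁ L, L) ≥ 0` (GKS) bound `F'`
from below by `-F Cov(σ₁, L)`; the third one and `u₃ ≤ 0` (GHS) bound it from above by
`⟨σ₁⟩ Var(L)`. Both covariances are controlled by `Cov(B, L) ≤ (‖J₁‖_∞ / ĥ) ⟨B⟩`, for `B` a
nonnegative combination of spins (`cov_le`): by positivity of covariances `L` may be replaced by
`(‖J₁‖_∞ / ĥ) ∑ gᵢ σᵢ`, and `Cov(B, ∑ gᵢ σᵢ) ≤ ⟨B⟩` because, by GHS, `s ↦ ⟨B⟩` with field `s g`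
is concave on `[0,1]`, and it vanishes at `s = 0` by spin-flip symmetry.

The correlation inequalities are proved by duplication: functions of several independent copies of
the spins that lie in a cone generated by single-site functions with nonnegative moments have
nonnegative sums against `exp` of an element of the cone. Two copies, rotated to `σ ± σ'`, give GKS;
four copies, under the orthogonal transformation of Ellis, Monroe and Newman, give GHS.

The fields must be nonnegative for all of this; that `w₁(t) ≥ h₁` is a continuity argument
(`lower_barrier`), since `w₁' = -F ≤ 0` as long as `w₁ ≥ 0`.
-/

/-- The `±1` value of a spin. -/
def sgn (b : Bool) : ℝ := if b then 1 else -1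

/-! ### A cone of functions with nonnegative sums -/

section Cone

variable {ι S : Type*} [Fintype ι] [DecidableEq ι] [Fintype S]

/-- The convex cone, closed under products, generated by the nonnegative constants and the functions
`ω ↦ φ (ω i)` with `φ ∈ M`. Here `M` is a multiplicative monoid of single-site functions. -/
def cone (ι : Type*) {S : Type*} (M : Submonoid (S → ℝ)) : Subsemiring ((ι → S) → ℝ) :=
  Subsemiring.closure
    ({f | ∃ φ ∈ M, ∃ i, f = fun ω => φ (ω i)} ∪ {f | ∃ c : ℝ, 0 ≤ c ∧ f = fun _ => c})

omit [Fintype ι] [DecidableEq ι] [Fintype S] in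
lemma const_mem_cone (M : Submonoid (S → ℝ)) {c : ℝ} (hc : 0 ≤ c) :
    (fun _ => c) ∈ cone ι M :=
  Subsemiring.subset_closure (Or.inr ⟨c, hc, rfl⟩)

omit [Fintype ι] [DecidableEq ι] [Fintype S] in
lemma site_mem_cone {M : Submonoid (S → ℝ)} {φ : S → ℝ} (hφ : φ ∈ M) (i : ι) :
    (fun ω : ι → S => φ (ω i)) ∈ cone ι M :=
  Subsemiring.subset_closure (Or.inl ⟨φ, hφ, i, rfl⟩)

omit [DecidableEq ι] [Fintype S] in
lemma linear_mem_cone {M : Submonoid (S → ℝ)} {φ : S → ℝ} (hφ : φ ∈ M) {a : ι → ℝ}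
    (ha : ∀ i, 0 ≤ a i) : (fun ω : ι → S => ∑ i, a i * φ (ω i)) ∈ cone ι M := by
  have h : (∑ i, (fun _ => a i) * (fun ω : ι → S => φ (ω i))) ∈ cone ι M :=
    Subsemiring.sum_mem _ fun i _ =>
      Subsemiring.mul_mem _ (const_mem_cone M (ha i)) (site_mem_cone hφ i)
  convert h using 1
  ext ω
  simp

omit [DecidableEq ι] [Fintype S] in
lemma quadratic_mem_cone {M : Submonoid (S → ℝ)} {φ : S → ℝ} (hφ : φ ∈ M) {K : ι → ι → ℝ}
    (hK : ∀ i j, 0 ≤ K i j) :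
    (fun ω : ι → S => ∑ i, ∑ j, K i j * (φ (ω i) * φ (ω j))) ∈ cone ι M := by
  have h : (∑ i, ∑ j, (fun _ => K i j) * ((fun ω : ι → S => φ (ω i)) * fun ω => φ (ω j)))
      ∈ cone ι M :=
    Subsemiring.sum_mem _ fun i _ => Subsemiring.sum_mem _ fun j _ =>
      Subsemiring.mul_mem _ (const_mem_cone M (hK i j))
        (Subsemiring.mul_mem _ (site_mem_cone hφ i) (site_mem_cone hφ j))
  convert h using 1
  ext ω
  simp

/-- If every `φ ∈ M` has nonnegative sum over a single site, every function of the cone has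
nonnegative sum over all configurations: a product of generators is a product over sites of
elements of `M`, and its sum factorizes. -/
lemma sum_nonneg_of_mem_cone {M : Submonoid (S → ℝ)} (hM : ∀ φ ∈ M, 0 ≤ ∑ s, φ s)
    {f : (ι → S) → ℝ} (hf : f ∈ cone ι M) : 0 ≤ ∑ ω, f ω := by
  rw [cone, Subsemiring.mem_closure_iff] at hf
  induction hf using AddSubmonoid.closure_induction with
  | zero => simp
  | add f g _ _ hf hg => simpa [Finset.sum_add_distrib] using add_nonneg hf hg
  | mem f hf =>
    have key : ∃ c : ℝ, 0 ≤ c ∧ ∃ φ : ι → S → ℝ, (∀ i, φ i ∈ M) ∧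
        f = fun ω => c * ∏ i, φ i (ω i) := by
      induction hf using Submonoid.closure_induction with
      | one => exact ⟨1, zero_le_one, 1, fun _ => M.one_mem, by ext; simp⟩
      | mem f hf =>
        rcases hf with ⟨φ, hφ, i, rfl⟩ | ⟨c, hc, rfl⟩
        · refine ⟨1, zero_le_one, Function.update 1 i φ, fun j => ?_, ?_⟩
          · by_cases hj : j = i
            · subst hj; simpa using hφ
            · simp [hj, M.one_mem]
          · ext ω
            rw [Finset.prod_eq_single i]
            · simp
            · intro j _ hj; simp [hj]
            · simp
        · exact ⟨c, hc, 1, fun _ => M.one_mem, by ext; simp⟩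
      | mul f g _ _ hf hg =>
        obtain ⟨c, hc, φ, hφ, rfl⟩ := hf
        obtain ⟨d, hd, ψ, hψ, rfl⟩ := hg
        refine ⟨c * d, mul_nonneg hc hd, φ * ψ, fun i => M.mul_mem (hφ i) (hψ i), ?_⟩
        ext ω
        simp only [Pi.mul_apply, Finset.prod_mul_distrib]
        ring
    obtain ⟨c, hc, φ, hφ, rfl⟩ := key
    rw [← Finset.mul_sum, ← Fintype.piFinset_univ, ← Finset.prod_univ_sum]
    exact mul_nonneg hc (Finset.prod_nonneg fun i _ => hM _ (hφ i))

/-- The same for the interacting weight `exp X`, by expanding the exponential. -/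
lemma sum_mul_exp_nonneg {M : Submonoid (S → ℝ)} (hM : ∀ φ ∈ M, 0 ≤ ∑ s, φ s)
    {f X : (ι → S) → ℝ} (hf : f ∈ cone ι M) (hX : X ∈ cone ι M) :
    0 ≤ ∑ ω, f ω * Real.exp (X ω) := by
  have h : HasSum (fun n : ℕ => ∑ ω, f ω * (X ω ^ n / n.factorial))
      (∑ ω, f ω * Real.exp (X ω)) :=
    hasSum_sum fun ω _ => by
      rw [Real.exp_eq_exp_ℝ]
      exact (NormedSpace.expSeries_div_hasSum_exp (X ω)).mul_left _
  refine h.nonneg fun n => ?_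
  have hmem : f * (X ^ n * fun _ => ((n.factorial : ℝ))⁻¹) ∈ cone ι M :=
    Subsemiring.mul_mem _ hf (Subsemiring.mul_mem _ (Subsemiring.pow_mem _ hX n)
      (const_mem_cone M (by positivity)))
  simpa [div_eq_mul_inv] using sum_nonneg_of_mem_cone hM hmem

end Cone

/-! ### Independent copies of the Ising model -/

section Copies

variable {ι : Type*} [Fintype ι] [DecidableEq ι]

/-- Minus the Hamiltonian of the Ising model with couplings `K` (summed over ordered pairs, diagonal
included) and external field `g`. -/
def en (K : ι → ι → ℝ) (g : ι → ℝ) (σ : ι → Bool) : ℝ :=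
  (∑ i, ∑ j, K i j * (sgn (σ i) * sgn (σ j))) + ∑ i, g i * sgn (σ i)

/-- The linear combination `∑ aᵢ σᵢ` of the spins. -/
def lin (a : ι → ℝ) (σ : ι → Bool) : ℝ := ∑ i, a i * sgn (σ i)

/-- Positivity for copies `(ω a)_{a : A}` of the Ising spins with total energy `X`. The site
variable of the cone at `i` is the tuple `(ω a i)_{a : A}`. -/
lemma sum_copies_nonneg {A : Type*} [Fintype A] [DecidableEq A]
    {M : Submonoid ((A → Bool) → ℝ)} (hM : ∀ φ ∈ M, 0 ≤ ∑ s, φ s)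
    {f X : (ι → A → Bool) → ℝ} (hf : f ∈ cone ι M) (hX : X ∈ cone ι M) (e : (ι → Bool) → ℝ)
    (he : ∀ ω, X ω = ∑ a, e (fun i => ω i a)) :
    0 ≤ ∑ ω : A → ι → Bool, f (fun i a => ω a i) * ∏ a, Real.exp (e (ω a)) := by
  have h := sum_mul_exp_nonneg hM hf hX
  rw [← Equiv.sum_comp (Equiv.piComm (fun (_ : A) (_ : ι) => Bool))] at h
  convert h using 2 with ω
  rw [he, Real.exp_sum]
  rfl

lemma sum_copies_prod {A X : Type*} [Fintype A] [DecidableEq A] [Fintype X]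
    (f : A → X → ℝ) : ∑ ω : A → X, ∏ a, f a (ω a) = ∏ a, ∑ x, f a x := by
  rw [Finset.prod_univ_sum, Fintype.piFinset_univ]

/-- Expansion of a three-point function of linear combinations of copies with independent weights
`W` into moments of a single copy. -/
lemma sum_copies_three {A X : Type*} [Fintype A] [DecidableEq A] [Fintype X]
    (W u v w : X → ℝ) (r s t : A → ℝ) :
    ∑ ω : A → X, ((∑ a, r a * u (ω a)) * (∑ a, s a * v (ω a)) * (∑ a, t a * w (ω a))) *
      ∏ a, W (ω a) =
    ∑ a, ∑ b, ∑ c, r a * s b * t c * ∏ e, ∑ x, (if e = a then u x else 1) *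
      (if e = b then v x else 1) * (if e = c then w x else 1) * W x := by
  have hω : ∀ ω : A → X, ((∑ a, r a * u (ω a)) * (∑ a, s a * v (ω a)) * (∑ a, t a * w (ω a))) *
      ∏ a, W (ω a) = ∑ a, ∑ b, ∑ c, r a * s b * t c * ∏ e, ((if e = a then u (ω e) else 1) *
      (if e = b then v (ω e) else 1) * (if e = c then w (ω e) else 1) * W (ω e)) := by
    intro ω
    simp_rw [Finset.prod_mul_distrib, Finset.prod_ite_eq', Finset.mem_univ, if_true]
    rw [Finset.sum_mul_sum, Finset.sum_mul, Finset.sum_mul]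
    refine Finset.sum_congr rfl fun a _ => ?_
    rw [Finset.sum_mul, Finset.sum_mul]
    refine Finset.sum_congr rfl fun b _ => ?_
    rw [Finset.mul_sum, Finset.sum_mul]
    exact Finset.sum_congr rfl fun c _ => by ring
  simp_rw [hω]
  rw [Finset.sum_comm]
  refine Finset.sum_congr rfl fun a _ => ?_
  rw [Finset.sum_comm]
  refine Finset.sum_congr rfl fun b _ => ?_
  rw [Finset.sum_comm]
  refine Finset.sum_congr rfl fun c _ => ?_
  rw [← Finset.mul_sum, sum_copies_prod (fun e x => (if e = a then u x else 1) *
      (if e = b then v x else 1) * (if e = c then w x else 1) * W x)]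

/-- A tuple of four spins as a function on `Fin 4`. -/
def fourEquiv : Bool × Bool × Bool × Bool ≃ (Fin 4 → Bool) where
  toFun p := ![p.1, p.2.1, p.2.2.1, p.2.2.2]
  invFun f := (f 0, f 1, f 2, f 3)
  left_inv p := rfl
  right_inv f := by ext i; fin_cases i <;> rfl

/-- The linear combination with coefficients `r` of the copies of a spin at one site. -/
def comb {A : Type*} [Fintype A] (r : A → ℝ) (s : A → Bool) : ℝ := ∑ a, r a * sgn (s a)

lemma comb_fourEquiv (p q r s : ℝ) (a b c d : Bool) :
    comb ![p, q, r, s] (fourEquiv (a, b, c, d)) =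
      p * sgn a + q * sgn b + r * sgn c + s * sgn d := by
  simp [comb, fourEquiv, Fin.sum_univ_four]
  rfl

/-- The monoid generated by the Ellis–Monroe–Newman variables: an orthogonal transformation of four
copies of a spin. The sign of the last generator is such that, when none of the four vanishes, their
product is `+1`; with the opposite sign the moments would not be nonnegative. -/
noncomputable def M4 : Submonoid ((Fin 4 → Bool) → ℝ) :=
  Submonoid.closure {comb ![1/2, 1/2, 1/2, 1/2], comb ![1/2, 1/2, -1/2, -1/2],
    comb ![1/2, -1/2, 1/2, -1/2], comb ![-1/2, 1/2, 1/2, -1/2]}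

lemma one_add_neg_one_pow_nonneg (n : ℕ) : (0 : ℝ) ≤ 1 + (-1) ^ n := by
  rcases neg_one_pow_eq_or ℝ n with h | h <;> simp [h]

lemma M4_sum_nonneg : ∀ φ ∈ M4, 0 ≤ ∑ s, φ s := by
  intro φ hφ
  have key : ∃ a b c d : ℕ, φ = comb ![1/2, 1/2, 1/2, 1/2] ^ a *
      comb ![1/2, 1/2, -1/2, -1/2] ^ b * comb ![1/2, -1/2, 1/2, -1/2] ^ c *
      comb ![-1/2, 1/2, 1/2, -1/2] ^ d := by
    induction hφ using Submonoid.closure_induction with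
    | one => exact ⟨0, 0, 0, 0, by simp⟩
    | mem f hf =>
      rcases hf with rfl | rfl | rfl | rfl
      · exact ⟨1, 0, 0, 0, by simp⟩
      · exact ⟨0, 1, 0, 0, by simp⟩
      · exact ⟨0, 0, 1, 0, by simp⟩
      · exact ⟨0, 0, 0, 1, by simp⟩
    | mul f g _ _ hf hg =>
      obtain ⟨a, b, c, d, rfl⟩ := hf
      obtain ⟨a', b', c', d', rfl⟩ := hg
      exact ⟨a + a', b + b', c + c', d + d', by ring⟩
  obtain ⟨a, b, c, d, rfl⟩ := key
  rw [← Equiv.sum_comp fourEquiv]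
  have h2 : ∀ n : ℕ, (-2 : ℝ) ^ n = (-1) ^ n * 2 ^ n := fun n => by rw [← mul_pow]; norm_num
  have e := one_add_neg_one_pow_nonneg
  -- The sixteen values of the four generators are `±2` on one coordinate axis, and the sign vectors
  -- with product `+1`; the latter contribute the product in the last line.
  have big : (0 : ℝ) ≤ (1 + (-1) ^ a) * 2 ^ a * (0 ^ b * 0 ^ c * 0 ^ d)
      + (1 + (-1) ^ b) * 2 ^ b * (0 ^ a * 0 ^ c * 0 ^ d)
      + (1 + (-1) ^ c) * 2 ^ c * (0 ^ a * 0 ^ b * 0 ^ d)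
      + (1 + (-1) ^ d) * 2 ^ d * (0 ^ a * 0 ^ b * 0 ^ c)
      + (1 + (-1) ^ (a + d)) * (1 + (-1) ^ (b + d)) * (1 + (-1) ^ (c + d)) := by
    have := e a; have := e b; have := e c; have := e d
    have := e (a + d); have := e (b + d); have := e (c + d)
    positivity
  refine big.trans (le_of_eq ?_)
  simp only [Fintype.sum_prod_type, Fintype.sum_bool, Pi.mul_apply, Pi.pow_apply,
    comb_fourEquiv, sgn]
  norm_num [h2]
  simp only [pow_add]
  rcases neg_one_pow_eq_or ℝ d with hd | hd <;> rw [hd] <;> ring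

/-- The monoid generated by the sum and the difference of two copies of a spin. -/
noncomputable def M2 : Submonoid ((Fin 2 → Bool) → ℝ) :=
  Submonoid.closure {comb ![1, 1], comb ![1, -1]}

lemma M2_sum_nonneg : ∀ φ ∈ M2, 0 ≤ ∑ s, φ s := by
  intro φ hφ
  have key : ∃ a b : ℕ, φ = comb ![1, 1] ^ a * comb ![1, -1] ^ b := by
    induction hφ using Submonoid.closure_induction with
    | one => exact ⟨0, 0, by simp⟩
    | mem f hf =>
      rcases hf with rfl | rfl
      · exact ⟨1, 0, by simp⟩
      · exact ⟨0, 1, by simp⟩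
    | mul f g _ _ hf hg =>
      obtain ⟨a, b, rfl⟩ := hf
      obtain ⟨a', b', rfl⟩ := hg
      exact ⟨a + a', b + b', by ring⟩
  obtain ⟨a, b, rfl⟩ := key
  rw [← Equiv.sum_comp (finTwoArrowEquiv Bool).symm]
  have h2 : ∀ n : ℕ, (-2 : ℝ) ^ n = (-1) ^ n * 2 ^ n := fun n => by rw [← mul_pow]; norm_num
  have big : (0 : ℝ) ≤ (1 + (-1) ^ a) * 2 ^ a * 0 ^ b + (1 + (-1) ^ b) * 2 ^ b * 0 ^ a := by
    have := one_add_neg_one_pow_nonneg a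
    have := one_add_neg_one_pow_nonneg b
    positivity
  refine big.trans (le_of_eq ?_)
  simp only [Fintype.sum_prod_type, Fintype.sum_bool, finTwoArrowEquiv, Pi.mul_apply, Pi.pow_apply, comb, Fin.sum_univ_two, sgn]
  norm_num [h2]
  ring

omit [DecidableEq ι] in
lemma sum_mul_comb {A : Type*} [Fintype A] (a : ι → ℝ) (r : A → ℝ) (ω : A → ι → Bool) :
    ∑ i, a i * comb r (fun e => ω e i) = ∑ e, r e * lin a (ω e) := by
  simp only [comb, lin, Finset.mul_sum]
  rw [Finset.sum_comm]
  exact Finset.sum_congr rfl fun e _ => Finset.sum_congr rfl fun i _ => by ring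

/-- The mean of `f` under the probability measure proportional to `exp X`. -/
noncomputable def gibbs {Ω : Type*} [Fintype Ω] (X f : Ω → ℝ) : ℝ :=
  (∑ x, f x * Real.exp (X x)) / ∑ x, Real.exp (X x)

omit [DecidableEq ι] in
/-- The energy of four copies lies in the cone: the transformation being orthogonal, the quadratic
part is the same in the new variables, and the field couples to the sum of the copies only. -/
lemma X4_mem {K : ι → ι → ℝ} (hK : ∀ i j, 0 ≤ K i j) {g : ι → ℝ} (hg : ∀ i, 0 ≤ g i) :
    (fun ω : ι → Fin 4 → Bool => ∑ a, en K g (fun i => ω i a)) ∈ cone ι M4 := by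
  have hα : comb ![1/2, 1/2, 1/2, 1/2] ∈ M4 := Submonoid.subset_closure (by simp)
  have hβ : comb ![1/2, 1/2, -1/2, -1/2] ∈ M4 := Submonoid.subset_closure (by simp)
  have hγ : comb ![1/2, -1/2, 1/2, -1/2] ∈ M4 := Submonoid.subset_closure (by simp)
  have hδ : comb ![-1/2, 1/2, 1/2, -1/2] ∈ M4 := Submonoid.subset_closure (by simp)
  have h := Subsemiring.add_mem _ (Subsemiring.add_mem _ (Subsemiring.add_mem _
    (Subsemiring.add_mem _ (quadratic_mem_cone hα hK) (quadratic_mem_cone hβ hK))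
    (quadratic_mem_cone hγ hK)) (quadratic_mem_cone hδ hK))
    (linear_mem_cone hα (a := fun i => 2 * g i) fun i => mul_nonneg zero_le_two (hg i))
  convert h using 1
  ext ω
  have hq : (∑ i, ∑ j, K i j * (sgn (ω i 0) * sgn (ω j 0))) +
      (∑ i, ∑ j, K i j * (sgn (ω i 1) * sgn (ω j 1))) +
      (∑ i, ∑ j, K i j * (sgn (ω i 2) * sgn (ω j 2))) +
      (∑ i, ∑ j, K i j * (sgn (ω i 3) * sgn (ω j 3))) =
      (∑ i, ∑ j, K i j * (comb ![1/2, 1/2, 1/2, 1/2] (ω i) * comb ![1/2, 1/2, 1/2, 1/2] (ω j))) +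
      (∑ i, ∑ j, K i j *
        (comb ![1/2, 1/2, -1/2, -1/2] (ω i) * comb ![1/2, 1/2, -1/2, -1/2] (ω j))) +
      (∑ i, ∑ j, K i j *
        (comb ![1/2, -1/2, 1/2, -1/2] (ω i) * comb ![1/2, -1/2, 1/2, -1/2] (ω j))) +
      (∑ i, ∑ j, K i j *
        (comb ![-1/2, 1/2, 1/2, -1/2] (ω i) * comb ![-1/2, 1/2, 1/2, -1/2] (ω j))) := by
    simp only [← Finset.sum_add_distrib, comb, Fin.sum_univ_four, Matrix.cons_val]
    exact Finset.sum_congr rfl fun i _ => Finset.sum_congr rfl fun j _ => by ring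
  have hl : (∑ i, g i * sgn (ω i 0)) + (∑ i, g i * sgn (ω i 1)) + (∑ i, g i * sgn (ω i 2)) +
      (∑ i, g i * sgn (ω i 3)) = ∑ i, 2 * g i * comb ![1/2, 1/2, 1/2, 1/2] (ω i) := by
    simp only [← Finset.sum_add_distrib, comb, Fin.sum_univ_four, Matrix.cons_val]
    exact Finset.sum_congr rfl fun i _ => by ring
  simp only [Pi.add_apply, en, Fin.sum_univ_four]
  linarith

omit [DecidableEq ι] in
lemma X2_mem {K : ι → ι → ℝ} (hK : ∀ i j, 0 ≤ K i j) {g : ι → ℝ} (hg : ∀ i, 0 ≤ g i) :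
    (fun ω : ι → Fin 2 → Bool => ∑ a, en K g (fun i => ω i a)) ∈ cone ι M2 := by
  have hp : comb ![1, 1] ∈ M2 := Submonoid.subset_closure (by simp)
  have hq : comb ![1, -1] ∈ M2 := Submonoid.subset_closure (by simp)
  have h := Subsemiring.add_mem _ (Subsemiring.add_mem _
    (quadratic_mem_cone hp (K := fun i j => K i j / 2) fun i j => by linarith [hK i j])
    (quadratic_mem_cone hq (K := fun i j => K i j / 2) fun i j => by linarith [hK i j]))
    (linear_mem_cone hp hg)
  convert h using 1
  ext ω
  have hq : (∑ i, ∑ j, K i j * (sgn (ω i 0) * sgn (ω j 0))) +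
      (∑ i, ∑ j, K i j * (sgn (ω i 1) * sgn (ω j 1))) =
      (∑ i, ∑ j, K i j / 2 * (comb ![1, 1] (ω i) * comb ![1, 1] (ω j))) +
      (∑ i, ∑ j, K i j / 2 * (comb ![1, -1] (ω i) * comb ![1, -1] (ω j))) := by
    simp only [← Finset.sum_add_distrib, comb, Fin.sum_univ_two, Matrix.cons_val]
    exact Finset.sum_congr rfl fun i _ => Finset.sum_congr rfl fun j _ => by ring
  have hl : (∑ i, g i * sgn (ω i 0)) + (∑ i, g i * sgn (ω i 1)) =
      ∑ i, g i * comb ![1, 1] (ω i) := by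
    simp only [← Finset.sum_add_distrib, comb, Fin.sum_univ_two, Matrix.cons_val]
    exact Finset.sum_congr rfl fun i _ => by ring
  simp only [Pi.add_apply, en, Fin.sum_univ_two]
  linarith

lemma partition_pos (K : ι → ι → ℝ) (g : ι → ℝ) : 0 < ∑ x, Real.exp (en K g x) :=
  Finset.sum_pos (fun _ _ => Real.exp_pos _) Finset.univ_nonempty

/-- The Griffiths–Hurst–Sherman inequality: third cumulants of nonnegative combinations of spins are
nonpositive. -/
lemma ghs {K : ι → ι → ℝ} (hK : ∀ i j, 0 ≤ K i j) {g : ι → ℝ} (hg : ∀ i, 0 ≤ g i)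
    {a b c : ι → ℝ} (ha : ∀ i, 0 ≤ a i) (hb : ∀ i, 0 ≤ b i) (hc : ∀ i, 0 ≤ c i) :
    gibbs (en K g) (lin a * lin b * lin c)
      - gibbs (en K g) (lin a * lin b) * gibbs (en K g) (lin c)
      - gibbs (en K g) (lin a * lin c) * gibbs (en K g) (lin b)
      - gibbs (en K g) (lin b * lin c) * gibbs (en K g) (lin a)
      + 2 * gibbs (en K g) (lin a) * gibbs (en K g) (lin b) * gibbs (en K g) (lin c) ≤ 0 := by
  have hβ : comb ![1/2, 1/2, -1/2, -1/2] ∈ M4 := Submonoid.subset_closure (by simp)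
  have hγ : comb ![1/2, -1/2, 1/2, -1/2] ∈ M4 := Submonoid.subset_closure (by simp)
  have hδ : comb ![-1/2, 1/2, 1/2, -1/2] ∈ M4 := Submonoid.subset_closure (by simp)
  have h := sum_copies_nonneg M4_sum_nonneg
    (Subsemiring.mul_mem _ (Subsemiring.mul_mem _ (linear_mem_cone hβ ha) (linear_mem_cone hγ hb))
      (linear_mem_cone hδ hc)) (X4_mem hK hg) (en K g) (fun _ => rfl)
  simp only [Pi.mul_apply, sum_mul_comb] at h
  rw [sum_copies_three (fun x => Real.exp (en K g x))] at h
  have hZ := partition_pos K g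
  simp only [Fin.sum_univ_four, Fin.prod_univ_four, Matrix.cons_val, Fin.reduceEq, if_true,
    if_false, one_mul, mul_one] at h
  simp only [gibbs, Pi.mul_apply]
  generalize ∑ x, Real.exp (en K g x) = Z at *
  generalize ∑ x, lin a x * lin b x * lin c x * Real.exp (en K g x) = Sabc at *
  generalize ∑ x, lin a x * lin b x * Real.exp (en K g x) = Sab at *
  generalize ∑ x, lin a x * lin c x * Real.exp (en K g x) = Sac at *
  generalize ∑ x, lin b x * lin c x * Real.exp (en K g x) = Sbc at *
  generalize ∑ x, lin a x * Real.exp (en K g x) = Sa at *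
  generalize ∑ x, lin b x * Real.exp (en K g x) = Sb at *
  generalize ∑ x, lin c x * Real.exp (en K g x) = Sc at *
  -- The four-copy correlation `h` is `-Z ^ 4 / 2` times the cumulant.
  ring_nf at h
  have e : Sabc / Z - Sab / Z * (Sc / Z) - Sac / Z * (Sb / Z) - Sbc / Z * (Sa / Z)
      + 2 * (Sa / Z) * (Sb / Z) * (Sc / Z) =
      (Sabc * Z ^ 3 - Sab * Sc * Z ^ 2 - Sac * Sb * Z ^ 2 - Sbc * Sa * Z ^ 2
        + 2 * Sa * Sb * Sc * Z) / Z ^ 4 := by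
    field_simp
  rw [e]
  apply div_nonpos_of_nonpos_of_nonneg _ (by positivity)
  linarith

/-- The second Griffiths–Kelly–Sherman inequality for a two-spin and a one-spin observable. With
`p`, `q` the sum and difference of two copies, `AB - A'B' = (p_A q_B + q_A p_B) / 2`. -/
lemma gks {K : ι → ι → ℝ} (hK : ∀ i j, 0 ≤ K i j) {g : ι → ℝ} (hg : ∀ i, 0 ≤ g i)
    {a b c : ι → ℝ} (ha : ∀ i, 0 ≤ a i) (hb : ∀ i, 0 ≤ b i) (hc : ∀ i, 0 ≤ c i) :
    gibbs (en K g) (lin a * lin b) * gibbs (en K g) (lin c) ≤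
      gibbs (en K g) (lin a * lin b * lin c) := by
  have hp : comb ![1, 1] ∈ M2 := Submonoid.subset_closure (by simp)
  have hq : comb ![1, -1] ∈ M2 := Submonoid.subset_closure (by simp)
  have h := sum_copies_nonneg M2_sum_nonneg
    (Subsemiring.mul_mem _ (Subsemiring.mul_mem _ (linear_mem_cone hp ha) (linear_mem_cone hq hb))
      (linear_mem_cone hq hc)) (X2_mem hK hg) (en K g) (fun _ => rfl)
  have h' := sum_copies_nonneg M2_sum_nonneg
    (Subsemiring.mul_mem _ (Subsemiring.mul_mem _ (linear_mem_cone hq ha) (linear_mem_cone hp hb))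
      (linear_mem_cone hq hc)) (X2_mem hK hg) (en K g) (fun _ => rfl)
  simp only [Pi.mul_apply, sum_mul_comb] at h h'
  rw [sum_copies_three (fun x => Real.exp (en K g x))] at h h'
  have hZ := partition_pos K g
  simp only [Fin.sum_univ_two, Fin.prod_univ_two, Matrix.cons_val, Fin.reduceEq, if_true,
    if_false, one_mul, mul_one] at h h'
  simp only [gibbs, Pi.mul_apply]
  generalize ∑ x, Real.exp (en K g x) = Z at *
  generalize ∑ x, lin a x * lin b x * lin c x * Real.exp (en K g x) = Sabc at *
  generalize ∑ x, lin a x * lin b x * Real.exp (en K g x) = Sab at *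
  generalize ∑ x, lin a x * lin c x * Real.exp (en K g x) = Sac at *
  generalize ∑ x, lin b x * lin c x * Real.exp (en K g x) = Sbc at *
  generalize ∑ x, lin a x * Real.exp (en K g x) = Sa at *
  generalize ∑ x, lin b x * Real.exp (en K g x) = Sb at *
  generalize ∑ x, lin c x * Real.exp (en K g x) = Sc at *
  ring_nf at h h'
  rw [div_mul_div_comm, div_le_div_iff₀ (by positivity) hZ]
  nlinarith

lemma cov_nonneg {K : ι → ι → ℝ} (hK : ∀ i j, 0 ≤ K i j) {g : ι → ℝ} (hg : ∀ i, 0 ≤ g i)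
    {a b : ι → ℝ} (ha : ∀ i, 0 ≤ a i) (hb : ∀ i, 0 ≤ b i) :
    gibbs (en K g) (lin a) * gibbs (en K g) (lin b) ≤ gibbs (en K g) (lin a * lin b) := by
  have hq : comb ![1, -1] ∈ M2 := Submonoid.subset_closure (by simp)
  have h := sum_copies_nonneg M2_sum_nonneg
    (Subsemiring.mul_mem _ (linear_mem_cone hq ha) (linear_mem_cone hq hb))
    (X2_mem hK hg) (en K g) (fun _ => rfl)
  simp only [Pi.mul_apply, sum_mul_comb] at h
  have h3 := sum_copies_three (fun x => Real.exp (en K g x)) (lin a) (lin b) (fun _ => 1)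
    ![1, -1] ![1, -1] (![1, 0] : Fin 2 → ℝ)
  simp only [Fin.sum_univ_two, Fin.prod_univ_two, Matrix.cons_val, Fin.reduceEq, if_true,
    if_false, one_mul, mul_one, add_zero, mul_zero, zero_mul, ite_self] at h h3
  rw [h3] at h
  have hZ := partition_pos K g
  simp only [gibbs, Pi.mul_apply]
  generalize ∑ x, Real.exp (en K g x) = Z at *
  generalize ∑ x, lin a x * lin b x * Real.exp (en K g x) = Sab at *
  generalize ∑ x, lin a x * Real.exp (en K g x) = Sa at *
  generalize ∑ x, lin b x * Real.exp (en K g x) = Sb at *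
  ring_nf at h
  rw [div_mul_div_comm, div_le_div_iff₀ (by positivity) hZ]
  nlinarith

lemma mean_nonneg {K : ι → ι → ℝ} (hK : ∀ i j, 0 ≤ K i j) {g : ι → ℝ} (hg : ∀ i, 0 ≤ g i)
    {a : ι → ℝ} (ha : ∀ i, 0 ≤ a i) : 0 ≤ gibbs (en K g) (lin a) := by
  have hp : comb ![1, 1] ∈ M2 := Submonoid.subset_closure (by simp)
  have h := sum_copies_nonneg M2_sum_nonneg (linear_mem_cone hp ha)
    (X2_mem hK hg) (en K g) (fun _ => rfl)
  simp only [sum_mul_comb] at h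
  have h3 := sum_copies_three (fun x => Real.exp (en K g x)) (lin a) (fun _ => 1) (fun _ => 1)
    ![1, 1] ![1, 0] (![1, 0] : Fin 2 → ℝ)
  simp only [Fin.sum_univ_two, Fin.prod_univ_two, Matrix.cons_val, Fin.reduceEq, if_true,
    if_false, one_mul, mul_one, add_zero, mul_zero, zero_mul, ite_self] at h h3
  rw [h3] at h
  have hZ := partition_pos K g
  refine div_nonneg ?_ hZ.le
  generalize ∑ x, Real.exp (en K g x) = Z at *
  generalize ∑ x, lin a x * Real.exp (en K g x) = Sa at *
  nlinarith

/-! ### Derivatives of Gibbs means and the susceptibility bound -/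

lemma gibbs_sub_smul {Ω : Type*} [Fintype Ω] (X f g : Ω → ℝ) (c : ℝ) :
    gibbs X (f - c • g) = gibbs X f - c * gibbs X g := by
  simp only [gibbs, Pi.sub_apply, Pi.smul_apply, smul_eq_mul, sub_mul, Finset.sum_sub_distrib,
    mul_assoc, ← Finset.mul_sum, sub_div, mul_div_assoc]

lemma hasDerivAt_gibbs {Ω : Type*} [Fintype Ω] [Nonempty Ω] {X : ℝ → Ω → ℝ} {X' : Ω → ℝ} {s : ℝ}
    (hX : ∀ x, HasDerivAt (fun s => X s x) (X' x) s) (f : Ω → ℝ) :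
    HasDerivAt (fun s => gibbs (X s) f)
      (gibbs (X s) (f * X') - gibbs (X s) f * gibbs (X s) X') s := by
  have hZ : 0 < ∑ x, Real.exp (X s x) :=
    Finset.sum_pos (fun _ _ => Real.exp_pos _) Finset.univ_nonempty
  have h1 : HasDerivAt (fun s => ∑ x, f x * Real.exp (X s x))
      (∑ x, f x * (Real.exp (X s x) * X' x)) s :=
    HasDerivAt.fun_sum fun x _ => ((hX x).exp).const_mul (f x)
  have h2 : HasDerivAt (fun s => ∑ x, Real.exp (X s x)) (∑ x, Real.exp (X s x) * X' x) s :=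
    HasDerivAt.fun_sum fun x _ => (hX x).exp
  refine (h1.fun_div h2 hZ.ne').congr_deriv ?_
  have e1 : ∑ x, f x * (Real.exp (X s x) * X' x) = ∑ x, (f * X') x * Real.exp (X s x) :=
    Finset.sum_congr rfl fun x _ => by simp only [Pi.mul_apply]; ring
  have e2 : ∑ x, Real.exp (X s x) * X' x = ∑ x, X' x * Real.exp (X s x) :=
    Finset.sum_congr rfl fun x _ => by ring
  rw [e1, e2]
  simp only [gibbs]
  field_simp

omit [DecidableEq ι] in
lemma en_smul (K : ι → ι → ℝ) (g : ι → ℝ) (s : ℝ) (σ : ι → Bool) :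
    en K (s • g) σ = s * lin g σ + en K 0 σ := by
  simp only [en, lin, Pi.smul_apply, smul_eq_mul, Pi.zero_apply, zero_mul,
    Finset.sum_const_zero, Finset.mul_sum, mul_assoc]
  ring

/-- Spin-flip symmetry: magnetizations vanish in zero field. -/
lemma mean_zero_field (K : ι → ι → ℝ) (a : ι → ℝ) : gibbs (en K 0) (lin a) = 0 := by
  have hs : ∀ b, sgn (!b) = -sgn b := by intro b; cases b <;> simp [sgn]
  have h : ∑ x, lin a x * Real.exp (en K 0 x) = -∑ x, lin a x * Real.exp (en K 0 x) := by
    conv_lhs => rw [← Equiv.sum_comp (Equiv.piCongrRight fun _ : ι => Equiv.boolNot)]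
    simp [lin, en, hs]
  rw [gibbs, show ∑ x, lin a x * Real.exp (en K 0 x) = 0 by linarith, zero_div]

/-- With `φ(s)` the mean of `∑ aᵢ σᵢ` in the field `s g`, the claim is `φ'(1) ≤ φ(1) - φ(0)`. This is
concavity of `φ`, which is the GHS inequality `φ'' ≤ 0`. -/
lemma susceptibility {K : ι → ι → ℝ} (hK : ∀ i j, 0 ≤ K i j) {g : ι → ℝ} (hg : ∀ i, 0 ≤ g i)
    {a : ι → ℝ} (ha : ∀ i, 0 ≤ a i) :
    gibbs (en K g) (lin a * lin g) - gibbs (en K g) (lin a) * gibbs (en K g) (lin g) ≤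
      gibbs (en K g) (lin a) := by
  set φ : ℝ → ℝ := fun s => gibbs (en K (s • g)) (lin a) with hφ
  set ψ : ℝ → ℝ := fun s => gibbs (en K (s • g)) (lin a * lin g) -
    gibbs (en K (s • g)) (lin a) * gibbs (en K (s • g)) (lin g) with hψ
  have hX : ∀ s x, HasDerivAt (fun s => en K (s • g) x) (lin g x) s := fun s x => by
    have e : (fun s : ℝ => en K (s • g) x) = fun s => s * lin g x + en K 0 x :=
      funext fun s => en_smul K g s x
    rw [e]
    simpa using ((hasDerivAt_id s).mul_const (lin g x)).add_const (en K 0 x)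
  have hd : ∀ f s, HasDerivAt (fun s => gibbs (en K (s • g)) f) _ s :=
    fun f s => hasDerivAt_gibbs (hX s) f
  have hψd : ∀ s, HasDerivAt ψ _ s := fun s =>
    (hd (lin a * lin g) s).fun_sub ((hd (lin a) s).fun_mul (hd (lin g) s))
  have hanti : AntitoneOn ψ (Set.Icc 0 1) := by
    refine antitoneOn_of_deriv_nonpos (convex_Icc 0 1)
      (fun s _ => (hψd s).continuousAt.continuousWithinAt)
      (fun s _ => (hψd s).differentiableAt.differentiableWithinAt) fun s hs => ?_
    rw [interior_Icc] at hs
    rw [(hψd s).deriv]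
    have := ghs hK (g := s • g) (fun i => mul_nonneg hs.1.le (hg i)) ha hg hg
    linarith
  obtain ⟨c, hc, hc'⟩ := exists_hasDerivAt_eq_slope φ ψ zero_lt_one
    (fun s _ => (hd (lin a) s).continuousAt.continuousWithinAt) (fun s _ => hd (lin a) s)
  have h1 := hanti ⟨hc.1.le, hc.2.le⟩ (Set.right_mem_Icc.2 zero_le_one) hc.2.le
  rw [hc'] at h1
  simpa [hφ, hψ, mean_zero_field] using h1

omit [DecidableEq ι] in
lemma abs_sgn (b : Bool) : |sgn b| = 1 := by cases b <;> simp [sgn]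

lemma mean_le {K : ι → ι → ℝ} {g : ι → ℝ} {a : ι → ℝ} (ha : ∀ i, 0 ≤ a i) :
    gibbs (en K g) (lin a) ≤ ∑ i, a i := by
  rw [gibbs, div_le_iff₀ (partition_pos K g), Finset.mul_sum]
  refine Finset.sum_le_sum fun x _ => mul_le_mul_of_nonneg_right ?_ (Real.exp_pos _).le
  refine Finset.sum_le_sum fun i _ => mul_le_of_le_one_right (ha i) ?_
  exact (le_abs_self _).trans (abs_sgn _).le

lemma cov_le {K : ι → ι → ℝ} (hK : ∀ i j, 0 ≤ K i j) {g : ι → ℝ} {η : ℝ} (hη : 0 < η)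
    (hg : ∀ i, η ≤ g i) {a b : ι → ℝ} {M : ℝ} (haM : ∀ i, a i ≤ M)
    (hM : 0 ≤ M) (hb : ∀ i, 0 ≤ b i) :
    gibbs (en K g) (lin b * lin a) - gibbs (en K g) (lin b) * gibbs (en K g) (lin a) ≤
      M / η * gibbs (en K g) (lin b) := by
  have hg0 : ∀ i, 0 ≤ g i := fun i => hη.le.trans (hg i)
  -- `(M / η) g - a` is entrywise nonnegative, so its covariance with `b` is nonnegative.
  have hc : ∀ i, 0 ≤ (M / η) * g i - a i := fun i => by
    have : M / η * η ≤ M / η * g i := mul_le_mul_of_nonneg_left (hg i) (by positivity)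
    rw [div_mul_cancel₀ _ hη.ne'] at this
    linarith [haM i]
  have h1 := cov_nonneg hK hg0 hb hc
  have e : lin (fun i => (M / η) * g i - a i) = (M / η) • lin g - (1 : ℝ) • lin a := by
    ext σ
    simp [lin, sub_mul, Finset.mul_sum, mul_assoc]
  have z : ∀ f, gibbs (en K g) ((M / η) • f) = M / η * gibbs (en K g) f := fun f => by
    have := gibbs_sub_smul (en K g) 0 f (-(M / η))
    simpa [gibbs] using this
  have e2 : lin b * ((M / η) • lin g - (1 : ℝ) • lin a) =
      (M / η) • (lin b * lin g) - (1 : ℝ) • (lin b * lin a) := by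
    ext σ; simp; ring
  rw [e, e2, gibbs_sub_smul, gibbs_sub_smul, z, z] at h1
  have h2 := mul_le_mul_of_nonneg_left (susceptibility hK hg0 hb) (by positivity : 0 ≤ M / η)
  linarith

/-- The bound on `F'(t)`, where `b` selects the first spin and `a` is the first row of `J`: the left-hand
side is the covariance of `L = ∑ aᵢ σᵢ` with the time derivative of the energy along the curve. -/
lemma drift_bound {K : ι → ι → ℝ} (hK : ∀ i j, 0 ≤ K i j) {g : ι → ℝ} {η : ℝ} (hη : 0 < η)
    (hg : ∀ i, η ≤ g i) {a b : ι → ℝ} {M : ℝ} (ha : ∀ i, 0 ≤ a i) (haM : ∀ i, a i ≤ M)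
    (hM : 0 ≤ M) (hb : ∀ i, 0 ≤ b i) (hb1 : ∑ i, b i = 1) :
    |gibbs (en K g) (lin a * (lin b * lin a - gibbs (en K g) (lin a) • lin b)) -
      gibbs (en K g) (lin a) * gibbs (en K g) (lin b * lin a - gibbs (en K g) (lin a) • lin b)| ≤
      M / η * ∑ i, a i := by
  have hg0 : ∀ i, 0 ≤ g i := fun i => hη.le.trans (hg i)
  set F := gibbs (en K g) (lin a) with hF
  have e2 : lin a * (lin b * lin a - F • lin b) = lin b * lin a * lin a - F • (lin b * lin a) := by
    ext σ; simp; ring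
  rw [e2, gibbs_sub_smul, gibbs_sub_smul]
  have h1 := ghs hK hg0 hb ha ha
  have h2 := gks hK hg0 hb ha ha
  have h3 := cov_le hK hη hg haM hM ha
  have h4 := cov_le hK hη hg haM hM hb
  have c3 := cov_nonneg hK hg0 ha ha
  have c4 := cov_nonneg hK hg0 hb ha
  have m1 : F ≤ ∑ i, a i := mean_le ha
  have m0 : 0 ≤ F := mean_nonneg hK hg0 ha
  have n1 : gibbs (en K g) (lin b) ≤ 1 := hb1 ▸ mean_le hb
  have n0 := mean_nonneg hK hg0 hb
  rw [← hF] at *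
  have hk : 0 ≤ M / η := by positivity
  have p : M / η * F ≤ M / η * ∑ i, a i := mul_le_mul_of_nonneg_left m1 hk
  rw [abs_le]
  constructor
  · have q : F * (gibbs (en K g) (lin b * lin a) - gibbs (en K g) (lin b) * F) ≤ F * (M / η) :=
      mul_le_mul_of_nonneg_left (h4.trans (mul_le_of_le_one_right hk n1)) m0
    linarith
  · have q : gibbs (en K g) (lin b) * (gibbs (en K g) (lin a * lin a) - F * F) ≤ M / η * F :=
      (mul_le_of_le_one_left (by linarith) n1).trans h3
    linarith

end Copies

/-! ### The interpolated Hamiltonian and the characteristic curve -/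

/-- The couplings of the interpolated Hamiltonian at time `t`, in the convention of `en`. The diagonal
entry at `0` contributes the constant `t * J 0 0`. -/
noncomputable def interpK {N : ℕ} [NeZero N] (J : Matrix (Fin N) (Fin N) ℝ) (t : ℝ)
    (i j : Fin N) : ℝ :=
  (if i = 0 then t * J 0 j else 0) + if i ≠ 0 then (if j ≠ 0 then J i j / 2 else 0) else 0

lemma interpK_nonneg {N : ℕ} [NeZero N] {J : Matrix (Fin N) (Fin N) ℝ} (hJ : ∀ i j, 0 ≤ J i j)
    {t : ℝ} (ht : 0 ≤ t) (i j : Fin N) : 0 ≤ interpK J t i j := by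
  have := hJ i j
  have := mul_nonneg ht (hJ 0 j)
  unfold interpK
  split_ifs <;> first | (exfalso; tauto) | linarith

lemma en_interpK {N : ℕ} [NeZero N] (J : Matrix (Fin N) (Fin N) ℝ) (t : ℝ) (g : Fin N → ℝ)
    (σ : Fin N → Bool) : en (interpK J t) g σ =
      t * sgn (σ 0) * (∑ i, J 0 i * sgn (σ i))
      + (1/2) * (∑ i ∈ Finset.univ.filter (fun i => i ≠ (0 : Fin N)),
          ∑ j ∈ Finset.univ.filter (fun j => j ≠ (0 : Fin N)),
            J i j * sgn (σ i) * sgn (σ j))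
      + ∑ i, g i * sgn (σ i) := by
  rw [en]
  congr 1
  simp only [interpK, add_mul, Finset.sum_add_distrib, ite_mul, zero_mul]
  congr 1
  · rw [Finset.sum_comm]
    simp only [Finset.sum_ite_eq', Finset.mem_univ, if_true, Finset.mul_sum]
    exact Finset.sum_congr rfl fun i _ => by ring
  · simp only [Finset.sum_filter, Finset.mul_sum]
    refine Finset.sum_congr rfl fun i _ => ?_
    split_ifs
    · rw [Finset.mul_sum]
      refine Finset.sum_congr rfl fun j _ => ?_
      split_ifs <;> ring
    · simp

/-- A solution which is nonincreasing wherever it is nonnegative, and positive at time `1`, stays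
above its value at time `1`. -/
lemma lower_barrier {y y' : ℝ → ℝ} (hy : ∀ t ∈ Set.Icc (0 : ℝ) 1, HasDerivAt y (y' t) t)
    (hy' : ∀ t ∈ Set.Icc (0 : ℝ) 1, 0 ≤ y t → y' t ≤ 0) (h1 : 0 < y 1) :
    ∀ t ∈ Set.Icc (0 : ℝ) 1, y 1 ≤ y t := by
  intro t ht
  by_contra! hlt
  obtain ⟨z, hz, hz1⟩ := exists_between (max_lt hlt h1)
  rw [max_lt_iff] at hz
  have hcont : ContinuousOn y (Set.Icc t 1) := fun r hr =>
    (hy r ⟨ht.1.trans hr.1, hr.2⟩).continuousAt.continuousWithinAt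
  have hclosed : IsClosed (Set.Icc t 1 ∩ y ⁻¹' Set.Iic z) :=
    hcont.preimage_isClosed_of_isClosed isClosed_Icc isClosed_Iic
  have hcomp : IsCompact (Set.Icc t 1 ∩ y ⁻¹' Set.Iic z) :=
    isCompact_Icc.of_isClosed_subset hclosed Set.inter_subset_left
  -- `s` is the last time at which the curve is at most `z`.
  obtain ⟨s, ⟨hs, hsz⟩, hmax⟩ := hcomp.exists_isGreatest ⟨t, ⟨le_rfl, ht.2⟩, hz.1.le⟩
  have hanti : AntitoneOn y (Set.Icc s 1) := by
    refine antitoneOn_of_deriv_nonpos (convex_Icc s 1)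
      (hcont.mono (Set.Icc_subset_Icc_left hs.1)) (fun r hr => ?_) (fun r hr => ?_)
    all_goals
      rw [interior_Icc] at hr
      have hr' : r ∈ Set.Icc (0 : ℝ) 1 := ⟨ht.1.trans (hs.1.trans hr.1.le), hr.2.le⟩
    · exact (hy r hr').differentiableAt.differentiableWithinAt
    · rw [(hy r hr').deriv]
      refine hy' r hr' ?_
      by_contra! hneg
      exact absurd (hmax ⟨⟨hs.1.trans hr.1.le, hr.2.le⟩, (hneg.le.trans hz.2.le : y r ≤ z)⟩)
        (not_le.2 hr.1)
  have := hanti ⟨le_rfl, hs.2⟩ ⟨hs.2, le_rfl⟩ hs.2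
  exact absurd (this.trans hsz) (not_le.2 hz1)

/-- **Bound (2.5).** The initial point of the approximate characteristic curve satisfies
`|w_1(0) - h_1 - J_1ᵀ m(1,h)| ≤ (‖J_1‖_∞/ĥ)(‖J_1‖_1 + log(1 + ‖J_1‖_1/ĥ))`. -/
theorem characteristic_initial_point_bound
    (N : ℕ) [NeZero N]
    (J : Matrix (Fin N) (Fin N) ℝ)
    (hJsym : ∀ i j, J i j = J j i)
    (hJnonneg : ∀ i j, 0 ≤ J i j)
    (h : Fin N → ℝ) (hh : ∀ i, 0 ≤ h i)
    (hhat : ℝ) (hhat_def : hhat = ⨅ i, h i) (hhat_pos : 0 < hhat)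
    (spin : Bool → ℝ) (hspin : spin = fun b => if b then 1 else -1)
    (H : ℝ → (Fin N → ℝ) → (Fin N → Bool) → ℝ)
    (hH : ∀ t g σ, H t g σ =
      -t * spin (σ 0) * (∑ i, J 0 i * spin (σ i))
      - (1/2) * (∑ i ∈ Finset.univ.filter (fun i => i ≠ (0 : Fin N)),
          ∑ j ∈ Finset.univ.filter (fun j => j ≠ (0 : Fin N)),
            J i j * spin (σ i) * spin (σ j))
      - ∑ i, g i * spin (σ i))
    (m : ℝ → (Fin N → ℝ) → Fin N → ℝ)
    (hm : ∀ t g k, m t g k =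
      (∑ σ : Fin N → Bool, spin (σ k) * Real.exp (-H t g σ)) /
      (∑ σ : Fin N → Bool, Real.exp (-H t g σ)))
    (w : ℝ → Fin N → ℝ)
    (hw1 : w 1 = h)
    (hwfix : ∀ t ∈ Set.Icc (0:ℝ) 1, ∀ i, i ≠ 0 → w t i = h i)
    (hwode : ∀ t ∈ Set.Icc (0:ℝ) 1,
      HasDerivAt (fun r => w r 0) (-(∑ i, J 0 i * m t (w t) i)) t) :
    |w 0 0 - h 0 - ∑ i, J 0 i * m 1 h i| ≤
      ((⨆ i, J 0 i) / hhat) *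
        ((∑ i, J 0 i) + Real.log (1 + (∑ i, J 0 i) / hhat)) := by
  obtain rfl : spin = sgn := hspin
  have hJM : ∀ i, J 0 i ≤ ⨆ i, J 0 i := fun i => le_ciSup (Set.finite_range _).bddAbove i
  have hM : 0 ≤ ⨆ i, J 0 i := (hJnonneg 0 0).trans (hJM 0)
  have hhh : ∀ i, hhat ≤ h i := fun i => hhat_def ▸ ciInf_le (Set.finite_range _).bddBelow i
  have hS : 0 ≤ ∑ i, J 0 i := Finset.sum_nonneg fun i _ => hJnonneg 0 i
  have hHen : ∀ t g, (fun σ => -H t g σ) = en (interpK J t) g := fun t g => by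
    ext σ; rw [hH, en_interpK]; ring
  have hF : ∀ t g, ∑ i, J 0 i * m t g i = gibbs (en (interpK J t) g) (lin (J 0)) := fun t g => by
    simp only [hm, ← hHen, gibbs, lin, Finset.sum_mul, mul_div_assoc', ← Finset.sum_div]
    rw [Finset.sum_comm]
    simp only [Finset.mul_sum, mul_assoc]
  -- `w` is only controlled on `[0,1]`; `v` agrees with it there and is differentiable at the endpoints.
  set v : ℝ → Fin N → ℝ := fun t => Function.update h 0 (w t 0) with hv
  have hwv : ∀ t ∈ Set.Icc (0 : ℝ) 1, w t = v t := fun t ht => by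
    ext i
    by_cases hi : i = 0
    · subst hi; simp [hv]
    · simp [hv, hi, hwfix t ht i hi]
  set F : ℝ → ℝ := fun t => gibbs (en (interpK J t) (v t)) (lin (J 0)) with hFdef
  have hy : ∀ t ∈ Set.Icc (0 : ℝ) 1, HasDerivAt (fun r => w r 0) (-F t) t := fun t ht => by
    have := hwode t ht
    rwa [hF, hwv t ht] at this
  have hw10 : w 1 0 = h 0 := by rw [hw1]
  have hbar : ∀ t ∈ Set.Icc (0 : ℝ) 1, h 0 ≤ w t 0 := by
    rw [← hw10]
    refine lower_barrier hy (fun t ht h0 => neg_nonpos.2 ?_)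
      (hw10 ▸ hhat_pos.trans_le (hhh 0))
    refine mean_nonneg (interpK_nonneg hJnonneg ht.1) (fun i => ?_) (hJnonneg 0)
    by_cases hi : i = 0
    · subst hi; simpa [hv] using h0
    · simpa [hv, hi] using hh i
  have hvh : ∀ t ∈ Set.Icc (0 : ℝ) 1, ∀ i, hhat ≤ v t i := fun t ht i => by
    by_cases hi : i = 0
    · subst hi; simpa [hv] using (hhh 0).trans (hbar t ht)
    · simpa [hv, hi] using hhh i
  set b : Fin N → ℝ := Pi.single 0 1 with hb
  have hb0 : ∀ i, 0 ≤ b i := fun i => by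
    by_cases hi : i = 0
    · subst hi; simp [hb]
    · simp [hb, hi]
  have hb1 : ∑ i, b i = 1 := by simp [hb]
  have hlb : ∀ σ, lin b σ = sgn (σ 0) := fun σ => by
    simp [lin, hb, Pi.single_apply]
  have hXd : ∀ t ∈ Set.Icc (0 : ℝ) 1, ∀ σ, HasDerivAt (fun s => en (interpK J s) (v s) σ)
      ((lin b * lin (J 0) - F t • lin b) σ) t := fun t ht σ => by
    have e : ∀ s, en (interpK J s) (v s) σ = s * (lin b σ * lin (J 0) σ) + w s 0 * lin b σ +
        en (interpK J 0) (Function.update h 0 0) σ := fun s => by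
      have e1 : ∀ i, v s i = Function.update h 0 0 i + if i = 0 then w s 0 else 0 := fun i => by
        by_cases hi : i = 0
        · subst hi; simp [hv]
        · simp [hv, hi]
      simp only [en_interpK, e1, add_mul, Finset.sum_add_distrib, ite_mul, zero_mul,
        Finset.sum_ite_eq', Finset.mem_univ, if_true, hlb]
      simp only [lin]
      ring
    simp only [e]
    have := (((hasDerivAt_id t).mul_const (lin b σ * lin (J 0) σ)).add
      ((hy t ht).mul_const (lin b σ))).add_const (en (interpK J 0) (Function.update h 0 0) σ)
    refine HasDerivAt.congr_deriv this ?_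
    simp
    ring
  -- The derivative of `t ↦ w t 0 + t F(t)` is `t F'(t)`.
  have hΦ : ∀ t ∈ Set.Icc (0 : ℝ) 1, HasDerivAt (fun t => w t 0 + t * F t)
      (-F t + (1 * F t + t * (_ - _))) t := fun t ht =>
    (hy t ht).add ((hasDerivAt_id t).mul (hasDerivAt_gibbs (hXd t ht) (lin (J 0))))
  have hbound := norm_image_sub_le_of_norm_deriv_le_segment_01'
    (f := fun t => w t 0 + t * F t) (C := (⨆ i, J 0 i) / hhat * ∑ i, J 0 i)
    (fun t ht => (hΦ t ht).hasDerivWithinAt) (fun t ht => by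
      have ht' : t ∈ Set.Icc (0 : ℝ) 1 := ⟨ht.1, ht.2.le⟩
      have := drift_bound (interpK_nonneg hJnonneg ht.1) hhat_pos (hvh t ht') (hJnonneg 0) hJM hM
        hb0 hb1
      rw [one_mul, neg_add_cancel_left, Real.norm_eq_abs, abs_mul, abs_of_nonneg ht.1]
      exact (mul_le_of_le_one_left (abs_nonneg _) ht.2.le).trans this)
  have hv1 : v 1 = h := by simp [hv, hw10]
  have hF1 : ∑ i, J 0 i * m 1 h i = F 1 := by
    rw [hF]
    simp only [hFdef, hv1]
  have hlog : 0 ≤ Real.log (1 + (∑ i, J 0 i) / hhat) :=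
    Real.log_nonneg (le_add_of_nonneg_right (by positivity))
  rw [hF1, show w 0 0 - h 0 - F 1 = -((w 1 0 + 1 * F 1) - (w 0 0 + 0 * F 0)) by rw [hw10]; ring,
    abs_neg]
  refine hbound.trans (mul_le_mul_of_nonneg_left (le_add_of_nonneg_right hlog) (by positivity))
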